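/- Let n ≥ 1 and let G ∈ 𝒢_{n,1} be reduced. For every nontrivial strong component G_p (a directed cycle of length ℓ_p) and every integer j with j ≥ 1 and j > d_p − ℓ_p: V_p⁺(j + ℓ_p) = V_p⁺(j), and V_p⁺ is the disjoint union of the sets V_p⁺(j), V_p⁺(j+1), …, V_p⁺(j + ℓ_p − 1). -/

import Mathlib

open MeasureTheory

/-- Node type for digraphs in `𝒢_{n,1}`: `none` is the control node `β`,
`some i` is the state node `α_i`. -/
abbrev Node (n : ℕ) := Option (Fin n)

/-- `w` is a walk of length `k` from `u` to `v` in the digraph with edge set `E`. -/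
def IsWalk {V : Type*} (E : Set (V × V)) (k : ℕ) (w : ℕ → V) (u v : V) : Prop :=
  w 0 = u ∧ w k = v ∧ ∀ t < k, (w t, w (t + 1)) ∈ E

/-- A path is a walk with no repeated node. -/
def IsPath {V : Type*} (E : Set (V × V)) (k : ℕ) (w : ℕ → V) (u v : V) : Prop :=
  IsWalk E k w u v ∧ ∀ s ≤ k, ∀ t ≤ k, w s = w t → s = t

/-- A cycle of length `k ≥ 1` from `u` to itself, all nodes pairwise distinct except
the coinciding endpoints. -/
def IsCycle {V : Type*} (E : Set (V × V)) (k : ℕ) (w : ℕ → V) (u : V) : Prop :=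
  1 ≤ k ∧ IsWalk E k w u u ∧ ∀ s < k, ∀ t < k, w s = w t → s = t

def Reachable {V : Type*} (E : Set (V × V)) (u v : V) : Prop :=
  ∃ k w, IsWalk E k w u v

/-- `u` lies on a cycle of the digraph. -/
def OnCycle {V : Type*} (E : Set (V × V)) (u : V) : Prop :=
  ∃ k w, IsCycle E k w u

def WeaklyConnected {V : Type*} (E : Set (V × V)) : Prop :=
  ∀ u v : V, ∃ (k : ℕ) (w : ℕ → V), w 0 = u ∧ w k = v ∧
    ∀ t < k, (w t, w (t + 1)) ∈ E ∨ (w (t + 1), w t) ∈ E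

/-- Membership in the class `𝒢_{n,1}`: no edge ends at `β` and the digraph is
weakly connected. -/
def MemG (n : ℕ) (E : Set (Node n × Node n)) : Prop :=
  (∀ e ∈ E, e.2 ≠ (none : Node n)) ∧ WeaklyConnected E

/-- `V⁺_cyc`: nodes reachable by a walk from some node lying on a cycle. -/
def CycSucc {V : Type*} (E : Set (V × V)) : Set V :=
  {v | ∃ u, OnCycle E u ∧ Reachable E u v}

/-- The node set of the core relative to a node set `N`: `N \ V⁺_cyc`. -/
def CoreOn {W : Type*} (N : Set W) (F : Set (W × W)) : Set W := N \ CycSucc F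

/-- The node set `V*` of the core `G*` of `G`. -/
def CoreNodes (n : ℕ) (E : Set (Node n × Node n)) : Set (Node n) :=
  CoreOn Set.univ E

/-- The core of `G` contains a directed spanning path: a path of `G` whose node set
is exactly `V*`. -/
def HasCoreSpanningPath (n : ℕ) (E : Set (Node n × Node n)) : Prop :=
  ∃ (k : ℕ) (w : ℕ → Node n) (u v : Node n), IsPath E k w u v ∧
    {x | ∃ t ≤ k, w t = x} = CoreNodes n E

/-- A compliant pair `(A, b) ∈ 𝕍(G)`: bounded continuous, with the sparsity
pattern dictated by the edge set `E`. -/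
def Compliant {n : ℕ} {S : Type*} [TopologicalSpace S] (E : Set (Node n × Node n))
    (A : S → Fin n → Fin n → ℝ) (b : S → Fin n → ℝ) : Prop :=
  Continuous A ∧ Continuous b ∧
  (∃ C, ∀ σ i j, |A σ i j| ≤ C) ∧ (∃ C, ∀ σ i, |b σ i| ≤ C) ∧
  (∀ σ (i j : Fin n), ((some j : Node n), (some i : Node n)) ∉ E → A σ i j = 0) ∧
  (∀ σ (i : Fin n), ((none : Node n), (some i : Node n)) ∉ E → b σ i = 0)

/-- The averaged-controllability rank criterion: the span of the Bochner integrals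
`∫ A(σ)^k b(σ) dμ`, `k ∈ ℕ`, is all of `ℝⁿ`. -/
def RankCriterion {n : ℕ} {S : Type*} [MeasurableSpace S]
    (μ : Measure S) (A : S → Fin n → Fin n → ℝ) (b : S → Fin n → ℝ) : Prop :=
  Submodule.span ℝ {x : Fin n → ℝ |
    ∃ k : ℕ, x = ∫ σ, (Matrix.of (A σ) ^ k).mulVec (b σ) ∂μ} = ⊤

/-- `S` is a topological manifold of dimension `d`. -/
def IsTopManifold (d : ℕ) (S : Type*) [TopologicalSpace S] : Prop :=
  ∀ x : S, ∃ U : Set S, IsOpen U ∧ x ∈ U ∧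
    ∃ W : Set (EuclideanSpace ℝ (Fin d)), IsOpen W ∧ Nonempty (↥U ≃ₜ ↥W)

/-- The support of `μ` contains a nonempty open set. -/
def SupportHasOpen {S : Type*} [TopologicalSpace S] [MeasurableSpace S]
    (μ : Measure S) : Prop :=
  ∃ U : Set S, IsOpen U ∧ U.Nonempty ∧ ∀ W ⊆ U, IsOpen W → W.Nonempty → 0 < μ W

/-- There is exactly one path from `u` to `v`. -/
def UniquePathFrom {V : Type*} (E : Set (V × V)) (u v : V) : Prop :=
  (∃ k w, IsPath E k w u v) ∧
  ∀ (k : ℕ) (w : ℕ → V) (k' : ℕ) (w' : ℕ → V),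
    IsPath E k w u v → IsPath E k' w' u v → k = k' ∧ ∀ t ≤ k, w t = w' t

/-- A directed tree on the node set `N`: there is a unique root, from which every node
is reachable by a unique path. -/
def IsDirectedTree {W : Type*} (N : Set W) (F : Set (W × W)) : Prop :=
  ∃ r ∈ N, (∀ v ∈ N, UniquePathFrom F r v) ∧
    (∀ r' ∈ N, (∀ v ∈ N, Reachable F r' v) → r' = r)

/-- The strong component of `u`: nodes mutually reachable with `u`. -/
def StrongComp {V : Type*} (E : Set (V × V)) (u : V) : Set V :=
  {v | Reachable E u v ∧ Reachable E v u}

/-- The nodes of the skeleton graph (condensation): the strong components. -/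
def SkelNodes {V : Type*} (E : Set (V × V)) : Set (Set V) :=
  {C | ∃ u, C = StrongComp E u}

/-- The edges of the skeleton graph: `(C, C')` is an edge whenever some edge of `E`
goes from a node of `C` to a node of `C'`. -/
def SkelEdges {V : Type*} (E : Set (V × V)) : Set (Set V × Set V) :=
  {p | p.1 ∈ SkelNodes E ∧ p.2 ∈ SkelNodes E ∧ ∃ u ∈ p.1, ∃ v ∈ p.2, (u, v) ∈ E}

/-- The induced subgraph on `N` (w.r.t. the ambient edge set `F`) is a directed path:
its nodes can be ordered `w 0, …, w r` so that its edges are exactly the consecutive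
pairs. -/
def IsPathGraphOn {W : Type*} (N : Set W) (F : Set (W × W)) : Prop :=
  ∃ (r : ℕ) (w : ℕ → W), (∀ s ≤ r, ∀ t ≤ r, w s = w t → s = t) ∧
    {x | ∃ t ≤ r, w t = x} = N ∧
    (∀ p : W × W, (p ∈ F ∧ p.1 ∈ N ∧ p.2 ∈ N) ↔ ∃ t < r, p = (w t, w (t + 1)))

/-- The induced subgraph on `C` is a single directed cycle: its nodes can be cyclically
ordered so that its edges are exactly the consecutive pairs. -/
def IsSingleCycleOn {V : Type*} (C : Set V) (E : Set (V × V)) : Prop :=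
  ∃ (l : ℕ) (w : ℕ → V), 1 ≤ l ∧ (∀ s < l, ∀ t < l, w s = w t → s = t) ∧
    {x | ∃ t < l, w t = x} = C ∧
    (∀ p : V × V, (p ∈ E ∧ p.1 ∈ C ∧ p.2 ∈ C) ↔ ∃ t < l, p = (w t, w ((t + 1) % l)))

/-- `G ∈ 𝒢_{n,1}` is reduced (Definition 5 of the paper): (1) the skeleton graph `S`
with self-loops removed is a directed tree and the core `S*` of `S` is a directed path;
(2) every edge of `S` between distinct components comes from a unique edge of `G`;
(3) every node of `S` with a self-loop is an out-neighbor of `S*`, and every nontrivial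
strong component of `G` is a single directed cycle. -/
def ReducedGraph (n : ℕ) (E : Set (Node n × Node n)) : Prop :=
  MemG n E ∧
  IsDirectedTree (SkelNodes E) {p ∈ SkelEdges E | p.1 ≠ p.2} ∧
  IsPathGraphOn (CoreOn (SkelNodes E) (SkelEdges E)) (SkelEdges E) ∧
  (∀ p ∈ SkelEdges E, p.1 ≠ p.2 →
    ∃! e : Node n × Node n, e ∈ E ∧ e.1 ∈ p.1 ∧ e.2 ∈ p.2) ∧
  (∀ C : Set (Node n), (C, C) ∈ SkelEdges E →
    (∃ C' ∈ CoreOn (SkelNodes E) (SkelEdges E), (C', C) ∈ SkelEdges E) ∧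
    IsSingleCycleOn C E)

/-- `V(j)`: nodes reachable from `β` by a walk of length `j`. -/
def VSet {n : ℕ} (E : Set (Node n × Node n)) (j : ℕ) : Set (Node n) :=
  {v | ∃ w : ℕ → Node n, IsWalk E j w (none : Node n) v}

/-- `V_p⁺`: nodes reachable by a walk from some node of the component `C`. -/
def VpPlus {n : ℕ} (E : Set (Node n × Node n)) (C : Set (Node n)) : Set (Node n) :=
  {v | ∃ u ∈ C, Reachable E u v}

/-!
In a reduced digraph at most one edge enters each strong component from outside, and a nontrivial
component, which is a directed cycle, reaches no other nontrivial component.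

Because of the unique entry edges, every walk from `β` to a node `v ∈ V_p⁺` passes through the
cycle `G_p`, and the path from `β` to `v` is unique. A repeated node on such a walk lies on a cycle
comparable with `G_p`, hence on `G_p` itself, and the closed walk between two of its visits has
length divisible by `ℓ_p`. Deleting these closed walks leaves the path, while turns around `G_p`
can be inserted freely, so `v ∈ V(k)` if and only if `k ≥ dep(v)` and `k ≡ dep(v)` modulo `ℓ_p`.
For `k > d_p - ℓ_p` the congruence alone suffices, and both claims follow.
-/

section Walks

variable {V : Type*} {E : Set (V × V)} {i j k k' : ℕ} {w w' : ℕ → V} {u v x : V}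

/-- The set of nodes that end a walk of length `k` from `r`; this is `V(k)` for `r = β`. -/
def reachableIn (E : Set (V × V)) (r : V) (k : ℕ) : Set V :=
  {v | ∃ w, IsWalk E k w r v}

/-- The nodes reachable from `C`; this is `V_p⁺` when `C` is the node set of `G_p`. -/
def descendants (E : Set (V × V)) (C : Set V) : Set V :=
  {v | ∃ u ∈ C, Reachable E u v}

/-- The edges that enter `D` from outside. -/
def entryEdges (E : Set (V × V)) (D : Set V) : Set (V × V) :=
  {e ∈ E | e.1 ∉ D ∧ e.2 ∈ D}

theorem IsWalk.take (h : IsWalk E k w u v) (hj : j ≤ k) : IsWalk E j w u (w j) :=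
  ⟨h.1, rfl, fun t ht => h.2.2 t (ht.trans_le hj)⟩

theorem IsWalk.segment (h : IsWalk E k w u v) (hij : i ≤ j) (hjk : j ≤ k) :
    IsWalk E (j - i) (fun t => w (i + t)) (w i) (w j) :=
  ⟨rfl, congrArg w (by omega), fun t ht => h.2.2 (i + t) (by omega)⟩

theorem IsWalk.append (h : IsWalk E k w u v) (h' : IsWalk E k' w' v x) :
    IsWalk E (k + k') (fun t => if t < k then w t else w' (t - k)) u x := by
  obtain ⟨hu, hv, hE⟩ := h
  obtain ⟨hv', hx, hE'⟩ := h'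
  refine ⟨?_, by simpa using hx, fun t ht => ?_⟩
  · rcases k.eq_zero_or_pos with rfl | hk
    · simpa using hv'.trans (hv.symm.trans hu)
    · simpa [hk] using hu
  · rcases lt_trichotomy (t + 1) k with hlt | heq | hgt
    · simpa [hlt, show t < k by omega] using hE t (by omega)
    · simpa [← heq, hv', ← hv] using hE t (by omega)
    · simpa [show ¬ t < k by omega, show ¬ t + 1 < k by omega,
        show t + 1 - k = t - k + 1 by omega] using hE' (t - k) (by omega)

theorem IsWalk.reachable_of_le (h : IsWalk E k w u v) (hij : i ≤ j) (hjk : j ≤ k) :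
    Reachable E (w i) (w j) :=
  ⟨_, _, h.segment hij hjk⟩

theorem Reachable.refl (u : V) : Reachable E u u :=
  ⟨0, fun _ => u, rfl, rfl, by simp⟩

theorem Reachable.of_mem (h : (u, v) ∈ E) : Reachable E u v :=
  ⟨1, fun t => if t = 0 then u else v, by simp [IsWalk, h]⟩

theorem Reachable.trans (h : Reachable E u v) (h' : Reachable E v x) : Reachable E u x :=
  let ⟨_, _, hw⟩ := h
  let ⟨_, _, hw'⟩ := h'
  ⟨_, _, hw.append hw'⟩

theorem IsWalk.exists_mem_entryEdges {D : Set V} (h : IsWalk E k w u v) (hu : u ∉ D)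
    (hv : v ∈ D) : ∃ i < k, (w i, w (i + 1)) ∈ entryEdges E D := by
  by_contra! hno
  have hout : ∀ t ≤ k, w t ∉ D := by
    intro t
    induction t with
    | zero => exact fun _ => h.1 ▸ hu
    | succ t ih => exact fun ht hmem => hno t ht ⟨h.2.2 t ht, ih (by omega), hmem⟩
  exact hout k le_rfl (h.2.1 ▸ hv)

theorem IsPath.take (h : IsPath E k w u v) (hj : j ≤ k) : IsPath E j w u (w j) :=
  ⟨h.1.take hj, fun s hs t ht => h.2 s (hs.trans hj) t (ht.trans hj)⟩

theorem IsPath.eq_zero_of_closed (h : IsPath E k w u u) : k = 0 :=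
  h.2 k le_rfl 0 (Nat.zero_le k) (h.1.2.1.trans h.1.1.symm)

theorem IsPath.update_succ (h : IsPath E k w u v) (hvx : (v, x) ∈ E) (hx : ∀ t ≤ k, w t ≠ x) :
    IsPath E (k + 1) (Function.update w (k + 1) x) u x := by
  have hw : ∀ t ≤ k, Function.update w (k + 1) x t = w t := fun t ht =>
    Function.update_of_ne (by omega) _ _
  have hlast : Function.update w (k + 1) x (k + 1) = x := Function.update_self ..
  refine ⟨⟨(hw 0 (Nat.zero_le k)).trans h.1.1, hlast, fun t ht => ?_⟩, fun s hs t ht hst => ?_⟩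
  · rcases (Nat.lt_succ_iff.1 ht).lt_or_eq with hlt | rfl
    · rw [hw t hlt.le, hw (t + 1) hlt]
      exact h.1.2.2 t hlt
    · rwa [hw t le_rfl, hlast, h.1.2.1]
  · rcases Nat.le_succ_iff.1 hs with hs | rfl <;> rcases Nat.le_succ_iff.1 ht with ht | rfl
    · rw [hw s hs, hw t ht] at hst
      exact h.2 s hs t ht hst
    · rw [hw s hs, hlast] at hst
      exact absurd hst (hx s hs)
    · rw [hw t ht, hlast] at hst
      exact absurd hst.symm (hx t ht)
    · rfl

theorem IsWalk.exists_shorter (h : IsWalk E k w u v) (hij : i < j) (hjk : j ≤ k)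
    (hw : w i = w j) : ∃ w', IsWalk E (k - (j - i)) w' u v := by
  have htail := h.segment hjk le_rfl
  rw [h.2.1, ← hw] at htail
  have hshort := (h.take (hij.le.trans hjk)).append htail
  rw [show i + (k - j) = k - (j - i) by omega] at hshort
  exact ⟨_, hshort⟩

theorem IsWalk.exists_longer (h : IsWalk E k w u v) (hi : i ≤ k)
    (hw' : IsWalk E k' w' (w i) (w i)) : ∃ w'', IsWalk E (k + k') w'' u v := by
  have htail := h.segment hi le_rfl
  rw [h.2.1] at htail
  have hlong := ((h.take hi).append hw').append htail
  rw [show i + k' + (k - i) = k + k' by omega] at hlong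
  exact ⟨_, hlong⟩

end Walks

section StrongComponents

variable {V : Type*} {E : Set (V × V)} {C D : Set V} {k : ℕ} {w : ℕ → V} {u v : V}

theorem mem_strongComp_self (u : V) : u ∈ StrongComp E u :=
  ⟨.refl u, .refl u⟩

theorem strongComp_mem_skelNodes (u : V) : StrongComp E u ∈ SkelNodes E :=
  ⟨u, rfl⟩

theorem reachable_of_mem_skelNodes (hC : C ∈ SkelNodes E) (hu : u ∈ C) (hv : v ∈ C) :
    Reachable E u v := by
  obtain ⟨x, rfl⟩ := hC
  exact hu.2.trans hv.1

theorem mem_of_mem_skelNodes (hC : C ∈ SkelNodes E) (hu : u ∈ C) (huv : Reachable E u v)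
    (hvu : Reachable E v u) : v ∈ C := by
  obtain ⟨x, rfl⟩ := hC
  exact ⟨hu.1.trans huv, hvu.trans hu.2⟩

theorem eq_strongComp_of_mem (hC : C ∈ SkelNodes E) (hu : u ∈ C) : C = StrongComp E u :=
  Set.ext fun _ =>
    ⟨fun hv => ⟨reachable_of_mem_skelNodes hC hu hv, reachable_of_mem_skelNodes hC hv hu⟩,
      fun hv => mem_of_mem_skelNodes hC hu hv.1 hv.2⟩

theorem strongComp_edge_mem_skelEdges (h : (u, v) ∈ E) :
    (StrongComp E u, StrongComp E v) ∈ SkelEdges E :=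
  ⟨strongComp_mem_skelNodes u, strongComp_mem_skelNodes v, u, mem_strongComp_self u, v,
    mem_strongComp_self v, h⟩

theorem IsWalk.strongComp_mem_skelEdges_of_closed (h : IsWalk E k w u u) (hk : 0 < k) :
    (StrongComp E u, StrongComp E u) ∈ SkelEdges E := by
  have hfirst : (u, w 1) ∈ E := h.1 ▸ h.2.2 0 hk
  have hback : Reachable E (w 1) u := h.2.1 ▸ h.reachable_of_le hk le_rfl
  exact ⟨strongComp_mem_skelNodes u, strongComp_mem_skelNodes u, u, mem_strongComp_self u, w 1,
    ⟨.of_mem hfirst, hback⟩, hfirst⟩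

theorem Reachable.skelEdges (hC : C ∈ SkelNodes E) (hD : D ∈ SkelNodes E) (hu : u ∈ C)
    (hv : v ∈ D) (h : Reachable E u v) : Reachable (SkelEdges E) C D := by
  obtain ⟨k, w, hw⟩ := h
  rw [eq_strongComp_of_mem hC hu, eq_strongComp_of_mem hD hv]
  exact ⟨k, fun t => StrongComp E (w t), congrArg _ hw.1, congrArg _ hw.2.1,
    fun t ht => strongComp_edge_mem_skelEdges (hw.2.2 t ht)⟩

theorem IsWalk.reachable_of_skelEdges {c : ℕ → Set V} (hC : C ∈ SkelNodes E)
    (h : IsWalk (SkelEdges E) k c C D) (hu : u ∈ C) (hv : v ∈ D) : Reachable E u v := by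
  induction k generalizing D v with
  | zero =>
    obtain rfl : C = D := h.1.symm.trans h.2.1
    exact reachable_of_mem_skelNodes hC hu hv
  | succ k ih =>
    obtain ⟨-, hD, a, ha, b, hb, hab⟩ : (c k, D) ∈ SkelEdges E := h.2.1 ▸ h.2.2 k k.lt_succ_self
    exact (ih (h.take k.le_succ) ha).trans
      ((Reachable.of_mem hab).trans (reachable_of_mem_skelNodes hD hb hv))

end StrongComponents

section Cycles

variable {V : Type*} {E : Set (V × V)} {C : Set V} {c : ℕ → V} {u u' v : V} {k l : ℕ}

theorem ncard_setOf_exists_lt (hinj : ∀ s < l, ∀ t < l, c s = c t → s = t) :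
    {x | ∃ t < l, c t = x}.ncard = l := by
  have himage : (c '' Set.Iio l).ncard = l := by
    have hinjOn : Set.InjOn c (Set.Iio l) := fun s hs t ht => hinj s hs t ht
    rw [hinjOn.ncard_image, ← Finset.coe_Iio, Set.ncard_coe_finset, Nat.card_Iio]
  exact himage

/-- An enumeration of the directed cycle on `C` along its edges. It is indexed periodically by all
of `ℕ`, so that following an edge adds `1` to the index with no wrap-around. -/
structure IsCyclicEnumeration (E : Set (V × V)) (C : Set V) (c : ℕ → V) : Prop where
  eq_iff : ∀ s t, c s = c t ↔ s ≡ t [MOD C.ncard]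
  range_eq : Set.range c = C
  mem_edges_iff : ∀ u ∈ C, ∀ v ∈ C, (u, v) ∈ E ↔ ∃ t, u = c t ∧ v = c (t + 1)

theorem IsSingleCycleOn.ncard_pos (h : IsSingleCycleOn C E) : 0 < C.ncard := by
  obtain ⟨l, c, hl, hinj, rfl, -⟩ := h
  rwa [ncard_setOf_exists_lt hinj]

theorem IsSingleCycleOn.exists_isCyclicEnumeration (h : IsSingleCycleOn C E) :
    ∃ c, IsCyclicEnumeration E C c := by
  obtain ⟨l, c, hl, hinj, hC, hE⟩ := h
  have hcard : C.ncard = l := hC ▸ ncard_setOf_exists_lt hinj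
  have hmod (t : ℕ) : t % l < l := Nat.mod_lt t hl
  have hmem (t : ℕ) : c (t % l) ∈ C := hC ▸ ⟨t % l, hmod t, rfl⟩
  refine ⟨fun t => c (t % l), fun s t => ?_, ?_, fun u hu v hv => ?_⟩
  · rw [hcard]
    exact ⟨hinj _ (hmod s) _ (hmod t), congrArg c⟩
  · refine Set.Subset.antisymm (Set.range_subset_iff.2 hmem) fun x hx => ?_
    obtain ⟨t, ht, rfl⟩ : ∃ t < l, c t = x := by rwa [← hC] at hx
    exact ⟨t, congrArg c (Nat.mod_eq_of_lt ht)⟩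
  · constructor
    · intro huv
      obtain ⟨t, ht, heq⟩ := (hE (u, v)).1 ⟨huv, hu, hv⟩
      obtain ⟨rfl, rfl⟩ := Prod.mk.inj heq
      exact ⟨t, by rw [Nat.mod_eq_of_lt ht], rfl⟩
    · rintro ⟨t, rfl, rfl⟩
      exact ((hE _).2 ⟨t % l, hmod t, by rw [Nat.mod_add_mod]⟩).1

theorem IsSingleCycleOn.pred_unique (h : IsSingleCycleOn C E) (hu : u ∈ C) (hu' : u' ∈ C)
    (hv : v ∈ C) (huv : (u, v) ∈ E) (huv' : (u', v) ∈ E) : u = u' := by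
  obtain ⟨c, hc⟩ := h.exists_isCyclicEnumeration
  obtain ⟨s, rfl, rfl⟩ := (hc.mem_edges_iff u hu v hv).1 huv
  obtain ⟨t, rfl, hst⟩ := (hc.mem_edges_iff u' hu' _ hv).1 huv'
  exact (hc.eq_iff s t).2 (((hc.eq_iff _ _).1 hst).add_right_cancel' 1)

theorem IsSingleCycleOn.exists_closed_walk (h : IsSingleCycleOn C E) (hu : u ∈ C) (m : ℕ) :
    ∃ w, IsWalk E (C.ncard * m) w u u := by
  obtain ⟨c, hc⟩ := h.exists_isCyclicEnumeration
  have hmem (t : ℕ) : c t ∈ C := hc.range_eq ▸ Set.mem_range_self t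
  obtain ⟨s, rfl⟩ : u ∈ Set.range c := hc.range_eq ▸ hu
  refine ⟨fun t => c (s + t), rfl, ?_, fun t _ => ?_⟩
  · exact (hc.eq_iff _ _).2 (by simp [Nat.ModEq])
  · exact (hc.mem_edges_iff _ (hmem _) _ (hmem _)).2 ⟨s + t, rfl, rfl⟩

theorem IsSingleCycleOn.ncard_dvd_of_closed_walk {w : ℕ → V} (h : IsSingleCycleOn C E)
    (hw : IsWalk E k w u u) (hmem : ∀ t ≤ k, w t ∈ C) : C.ncard ∣ k := by
  obtain ⟨c, hc⟩ := h.exists_isCyclicEnumeration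
  obtain ⟨s, hs⟩ : w 0 ∈ Set.range c := hc.range_eq ▸ hmem 0 (Nat.zero_le k)
  have hshift : ∀ t ≤ k, w t = c (s + t) := by
    intro t
    induction t with
    | zero => exact fun _ => hs.symm
    | succ t ih =>
      intro ht
      obtain ⟨i, hi, hi'⟩ :=
        (hc.mem_edges_iff _ (hmem t (by omega)) _ (hmem _ ht)).1 (hw.2.2 t ht)
      have hmod := (hc.eq_iff _ _).1 (hi.symm.trans (ih (by omega)))
      exact hi'.trans ((hc.eq_iff _ _).2 (hmod.add_right 1))
  have hclosed : c (s + k) = c (s + 0) :=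
    (hshift k le_rfl).symm.trans ((hw.2.1.trans hw.1.symm).trans hs.symm)
  exact Nat.modEq_zero_iff_dvd.1 (((hc.eq_iff _ _).1 hclosed).add_left_cancel' s)

end Cycles

/-- The local structure of reduced digraphs, on an arbitrary node type: each strong component has at
most one entry edge, each nontrivial one is a directed cycle, and no nontrivial one reaches
another. -/
structure HasIsolatedCycles {V : Type*} (E : Set (V × V)) : Prop where
  entryEdges_subsingleton : ∀ C ∈ SkelNodes E, (entryEdges E C).Subsingleton
  isSingleCycleOn : ∀ C, (C, C) ∈ SkelEdges E → IsSingleCycleOn C E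
  eq_of_reachable : ∀ C D, (C, C) ∈ SkelEdges E → (D, D) ∈ SkelEdges E →
    ∀ u ∈ C, ∀ v ∈ D, Reachable E u v → C = D

section Skeleton

variable {V : Type*} {E : Set (V × V)} {C D : Set V} {a b : V}

/-- The edges of the skeleton graph that are not self-loops. -/
def properSkelEdges (E : Set (V × V)) : Set (Set V × Set V) :=
  {p ∈ SkelEdges E | p.1 ≠ p.2}

theorem mem_properSkelEdges_of_mem_entryEdges (hD : D ∈ SkelNodes E)
    (hab : (a, b) ∈ entryEdges E D) : (StrongComp E a, D) ∈ properSkelEdges E := by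
  obtain ⟨hE, ha, hb⟩ := hab
  exact ⟨⟨strongComp_mem_skelNodes a, hD, a, mem_strongComp_self a, b, hb, hE⟩,
    fun heq : StrongComp E a = D => ha (heq ▸ mem_strongComp_self a)⟩

theorem exists_isPath_of_mem_entryEdges {R : Set V} {k : ℕ} {c : ℕ → Set V}
    (hD : D ∈ SkelNodes E) (hab : (a, b) ∈ entryEdges E D)
    (hc : IsPath (properSkelEdges E) k c R (StrongComp E a)) :
    ∃ c', IsPath (properSkelEdges E) (k + 1) c' R D ∧ c' k = StrongComp E a := by
  refine ⟨_, hc.update_succ (mem_properSkelEdges_of_mem_entryEdges hD hab) ?_, ?_⟩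
  · rintro t ht rfl
    have hwalk := hc.1.segment ht le_rfl
    rw [hc.1.2.1] at hwalk
    have hskel : IsWalk (SkelEdges E) (k - t) (fun i => c (t + i)) (c t) (StrongComp E a) :=
      ⟨hwalk.1, hwalk.2.1, fun i hi => (hwalk.2.2 i hi).1⟩
    have hba := hskel.reachable_of_skelEdges hD hab.2.2 (mem_strongComp_self a)
    exact hab.2.1 (mem_of_mem_skelNodes hD hab.2.2 hba (.of_mem hab.1))
  · rw [Function.update_of_ne (by omega), hc.1.2.1]

theorem IsDirectedTree.entryEdges_subsingleton
    (htree : IsDirectedTree (SkelNodes E) (properSkelEdges E))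
    (huniq : ∀ p ∈ SkelEdges E, p.1 ≠ p.2 → ∃! e : V × V, e ∈ E ∧ e.1 ∈ p.1 ∧ e.2 ∈ p.2)
    (hD : D ∈ SkelNodes E) : (entryEdges E D).Subsingleton := by
  rintro ⟨a, b⟩ hab ⟨a', b'⟩ hab'
  obtain ⟨R, -, hpath, -⟩ := htree
  obtain ⟨⟨k, c, hc⟩, -⟩ := hpath _ (strongComp_mem_skelNodes a)
  obtain ⟨⟨k', c', hc'⟩, -⟩ := hpath _ (strongComp_mem_skelNodes a')
  obtain ⟨p, hp, hpk⟩ := exists_isPath_of_mem_entryEdges hD hab hc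
  obtain ⟨p', hp', hpk'⟩ := exists_isPath_of_mem_entryEdges hD hab' hc'
  obtain ⟨hlen, hnodes⟩ := (hpath D hD).2 _ _ _ _ hp hp'
  obtain rfl : k = k' := Nat.succ_injective hlen
  have hcomp : StrongComp E a = StrongComp E a' :=
    hpk.symm.trans ((hnodes k k.le_succ).trans hpk')
  obtain ⟨hedge, hne⟩ := mem_properSkelEdges_of_mem_entryEdges hD hab
  exact (huniq _ hedge hne).unique ⟨hab.1, mem_strongComp_self a, hab.2.2⟩
    ⟨hab'.1, hcomp ▸ mem_strongComp_self a', hab'.2.2⟩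

theorem mem_cycSucc_of_loop {W : Type*} {F : Set (W × W)} {x y : W} (hx : (x, x) ∈ F)
    (hxy : Reachable F x y) : y ∈ CycSucc F :=
  ⟨x, ⟨1, fun _ => x, le_rfl, ⟨rfl, rfl, fun _ _ => hx⟩, by omega⟩, hxy⟩

theorem eq_of_reachable_of_core_pred {u v : V} (hentry : (entryEdges E D).Subsingleton)
    (hC : (C, C) ∈ SkelEdges E) (hD : (D, D) ∈ SkelEdges E)
    (hcore : ∃ P ∈ CoreOn (SkelNodes E) (SkelEdges E), (P, D) ∈ SkelEdges E)
    (hu : u ∈ C) (hv : v ∈ D) (huv : Reachable E u v) : C = D := by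
  by_contra hne
  obtain ⟨P, ⟨hP, hPcore⟩, -, -, p, hp, q, hq, hpq⟩ := hcore
  have huD : u ∉ D := fun huD =>
    hne ((eq_strongComp_of_mem hC.1 hu).trans (eq_strongComp_of_mem hD.1 huD).symm)
  have hpD : p ∉ D := by
    intro hpD
    obtain rfl : P = D := (eq_strongComp_of_mem hP hp).trans (eq_strongComp_of_mem hD.1 hpD).symm
    exact hPcore (mem_cycSucc_of_loop hD (.refl P))
  obtain ⟨k, w, hw⟩ := huv
  obtain ⟨i, hi, hmem⟩ := hw.exists_mem_entryEdges huD hv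
  have hwp : w i = p := congrArg Prod.fst (hentry hmem ⟨hpq, hpD, hq⟩)
  have hup : Reachable E u p := ⟨i, w, hwp ▸ hw.take hi.le⟩
  exact hPcore (mem_cycSucc_of_loop hC (hup.skelEdges hC.1 hP hu hp))

theorem ReducedGraph.hasIsolatedCycles {n : ℕ} {E : Set (Node n × Node n)}
    (h : ReducedGraph n E) : HasIsolatedCycles E := by
  obtain ⟨-, htree, -, huniq, hloop⟩ := h
  have hentry : ∀ D ∈ SkelNodes E, (entryEdges E D).Subsingleton := fun D hD =>
    IsDirectedTree.entryEdges_subsingleton htree huniq hD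
  exact ⟨hentry, fun C hC => (hloop C hC).2, fun C D hC hD u hu v hv =>
    eq_of_reachable_of_core_pred (hentry D hD.1) hC hD (hloop D hD).1 hu hv⟩

end Skeleton

namespace HasIsolatedCycles

variable {V : Type*} {E : Set (V × V)} {C : Set V} {r u v : V} {i j k k' : ℕ} {w w' : ℕ → V}

theorem pred_mem_strongComp_of_isPath (hE : HasIsolatedCycles E)
    (hw : IsPath E (k + 1) w r v) (hw' : IsWalk E (k' + 1) w' r v)
    (h : w k ∈ StrongComp E v) : w' k' ∈ StrongComp E v := by
  by_contra h'
  have hlast : (w' k', v) ∈ entryEdges E (StrongComp E v) :=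
    ⟨hw'.2.1 ▸ hw'.2.2 k' k'.lt_succ_self, h', mem_strongComp_self v⟩
  have hr : r ∉ StrongComp E v := fun hr =>
    h' ⟨hr.1.trans ⟨k', w', hw'.take k'.le_succ⟩, .of_mem hlast.1⟩
  obtain ⟨i, hi, hmem⟩ := (hw.1.take k.le_succ).exists_mem_entryEdges hr h
  have hvisit : w (i + 1) = v := congrArg Prod.snd
    (hE.entryEdges_subsingleton _ (strongComp_mem_skelNodes v) hmem hlast)
  have : i + 1 = k + 1 :=
    hw.2 _ (by omega) _ le_rfl (hvisit.trans hw.1.2.1.symm)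
  omega

theorem pred_eq_of_isPath (hE : HasIsolatedCycles E)
    (hw : IsPath E (k + 1) w r v) (hw' : IsPath E (k' + 1) w' r v) : w k = w' k' := by
  have hv : (w k, v) ∈ E := hw.1.2.1 ▸ hw.1.2.2 k k.lt_succ_self
  have hv' : (w' k', v) ∈ E := hw'.1.2.1 ▸ hw'.1.2.2 k' k'.lt_succ_self
  have hmem := mem_strongComp_self (E := E) v
  have hnode := strongComp_mem_skelNodes (E := E) v
  by_cases h : w k ∈ StrongComp E v
  · have h' := hE.pred_mem_strongComp_of_isPath hw hw'.1 h
    have hloop : (StrongComp E v, StrongComp E v) ∈ SkelEdges E :=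
      ⟨hnode, hnode, w k, h, v, hmem, hv⟩
    exact (hE.isSingleCycleOn _ hloop).pred_unique h h' hmem hv hv'
  · have h' : w' k' ∉ StrongComp E v := fun h' =>
      h (hE.pred_mem_strongComp_of_isPath hw' hw.1 h')
    exact congrArg Prod.fst
      (hE.entryEdges_subsingleton _ hnode ⟨hv, h, hmem⟩ ⟨hv', h', hmem⟩)

theorem length_eq_of_isPath (hE : HasIsolatedCycles E)
    (hw : IsPath E k w r v) (hw' : IsPath E k' w' r v) : k = k' := by
  induction k generalizing k' v with
  | zero =>
    obtain rfl : r = v := hw.1.1.symm.trans hw.1.2.1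
    exact hw'.eq_zero_of_closed.symm
  | succ k ih =>
    cases k' with
    | zero =>
      obtain rfl : r = v := hw'.1.1.symm.trans hw'.1.2.1
      exact hw.eq_zero_of_closed
    | succ k' =>
      have hpred := hw'.take k'.le_succ
      rw [← hE.pred_eq_of_isPath hw hw'] at hpred
      exact congrArg Nat.succ (ih (hw.take k.le_succ) hpred)

theorem exists_mem_of_isWalk (hE : HasIsolatedCycles E) (hC : C ∈ SkelNodes E) (hu : u ∈ C)
    (hru : Reachable E r u) (hw' : IsWalk E k' w' u v) (hw : IsWalk E k w r v) :
    ∃ i ≤ k, w i ∈ C := by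
  -- Both walks enter the strong component of `v` through the same edge: pass to its source.
  induction k' using Nat.strong_induction_on generalizing k v with
  | _ k' ih =>
    by_cases hv : v ∈ C
    · exact ⟨k, le_rfl, hw.2.1 ▸ hv⟩
    have huv : Reachable E u v := ⟨k', w', hw'⟩
    have hvu : ¬ Reachable E v u := fun hvu => hv (mem_of_mem_skelNodes hC hu huv hvu)
    have hmem := mem_strongComp_self (E := E) v
    obtain ⟨s, hs, hse⟩ := hw'.exists_mem_entryEdges (fun h => hvu h.1) hmem
    obtain ⟨t, ht, hte⟩ := hw.exists_mem_entryEdges (fun h => hvu (h.1.trans hru)) hmem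
    have hst : w' s = w t := congrArg Prod.fst
      (hE.entryEdges_subsingleton _ (strongComp_mem_skelNodes v) hse hte)
    obtain ⟨i, hi, hiC⟩ := ih s hs (hst ▸ hw'.take hs.le) (hw.take ht.le)
    exact ⟨i, hi.trans ht.le, hiC⟩

theorem mem_of_repeated (hE : HasIsolatedCycles E) (hC : (C, C) ∈ SkelEdges E)
    (hw : IsWalk E k w r v) {m : ℕ} (hm : m ≤ k) (hmC : w m ∈ C) (hij : i < j) (hj : j ≤ k)
    (heq : w i = w j) : w i ∈ C := by
  have hclosed := hw.segment hij.le hj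
  rw [← heq] at hclosed
  have hloop := hclosed.strongComp_mem_skelEdges_of_closed (Nat.sub_pos_of_lt hij)
  have hmem := mem_strongComp_self (E := E) (w i)
  rcases le_total m i with hmi | him
  · rwa [hE.eq_of_reachable _ _ hC hloop _ hmC _ hmem
      (hw.reachable_of_le hmi (hij.le.trans hj))]
  · rwa [← hE.eq_of_reachable _ _ hloop hC _ hmem _ hmC (hw.reachable_of_le him hm)]

theorem ncard_dvd_of_repeated (hE : HasIsolatedCycles E) (hC : (C, C) ∈ SkelEdges E)
    (hw : IsWalk E k w r v) {m : ℕ} (hm : m ≤ k) (hmC : w m ∈ C) (hij : i < j) (hj : j ≤ k)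
    (heq : w i = w j) : C.ncard ∣ j - i := by
  have hiC := hE.mem_of_repeated hC hw hm hmC hij hj heq
  have hclosed := hw.segment hij.le hj
  rw [← heq] at hclosed
  refine (hE.isSingleCycleOn C hC).ncard_dvd_of_closed_walk hclosed fun t ht => ?_
  have hback := hw.reachable_of_le (show i + t ≤ j by omega) hj
  rw [← heq] at hback
  exact mem_of_mem_skelNodes hC.1 hiC
    (hw.reachable_of_le (Nat.le_add_right i t) (by omega)) hback

theorem exists_isPath_modEq (hE : HasIsolatedCycles E) (hC : (C, C) ∈ SkelEdges E)
    (hr : ∀ u ∈ C, Reachable E r u) (hv : v ∈ descendants E C) (hw : IsWalk E k w r v) :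
    ∃ d p, IsPath E d p r v ∧ d ≤ k ∧ d ≡ k [MOD C.ncard] := by
  induction k using Nat.strong_induction_on generalizing w with
  | _ k ih =>
    by_cases hpath : ∀ i ≤ k, ∀ j ≤ k, w i = w j → i = j
    · exact ⟨k, w, ⟨hw, hpath⟩, le_rfl, rfl⟩
    obtain ⟨i, j, hij, hj, heq⟩ : ∃ i j, i < j ∧ j ≤ k ∧ w i = w j := by
      push Not at hpath
      obtain ⟨i, hi, j, hj, heq, hne⟩ := hpath
      rcases hne.lt_or_gt with hlt | hgt
      · exact ⟨i, j, hlt, hj, heq⟩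
      · exact ⟨j, i, hgt, hi, heq.symm⟩
    obtain ⟨u, hu, k', w', hw'⟩ := hv
    obtain ⟨m, hm, hmC⟩ := hE.exists_mem_of_isWalk hC.1 hu (hr u hu) hw' hw
    have hdvd := hE.ncard_dvd_of_repeated hC hw hm hmC hij hj heq
    have hmod : k - (j - i) ≡ k [MOD C.ncard] :=
      (Nat.modEq_iff_dvd' (Nat.sub_le k _)).2 (by rwa [Nat.sub_sub_self (by omega)])
    obtain ⟨_, hshort⟩ := hw.exists_shorter hij hj heq
    obtain ⟨d, p, hp, hle, hdmod⟩ := ih _ (by omega) hshort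
    exact ⟨d, p, hp, hle.trans (Nat.sub_le k _), hdmod.trans hmod⟩

theorem mem_reachableIn_iff (hE : HasIsolatedCycles E) (hC : (C, C) ∈ SkelEdges E)
    (hr : ∀ u ∈ C, Reachable E r u) (hv : v ∈ descendants E C) {d : ℕ} {p : ℕ → V}
    (hp : IsPath E d p r v) :
    v ∈ reachableIn E r k ↔ d ≤ k ∧ d ≡ k [MOD C.ncard] := by
  constructor
  · rintro ⟨w, hw⟩
    obtain ⟨d', p', hp', h⟩ := hE.exists_isPath_modEq hC hr hv hw
    rwa [hE.length_eq_of_isPath hp hp']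
  · rintro ⟨hle, hmod⟩
    obtain ⟨u, hu, k', w', hw'⟩ := hv
    obtain ⟨i, hi, hiC⟩ := hE.exists_mem_of_isWalk hC.1 hu (hr u hu) hw' hp.1
    obtain ⟨m, hm⟩ := (Nat.modEq_iff_dvd' hle).1 hmod
    obtain ⟨_, hturns⟩ := (hE.isSingleCycleOn C hC).exists_closed_walk hiC m
    obtain ⟨w, hw⟩ := hp.1.exists_longer hi hturns
    exact ⟨w, by rwa [← hm, Nat.add_sub_cancel' hle] at hw⟩

end HasIsolatedCycles

theorem exists_lt_modEq_add {l : ℕ} (hl : 0 < l) (d j : ℕ) : ∃ k < l, d ≡ j + k [MOD l] := by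
  obtain ⟨k, hk, hmod⟩ := Int.existsUnique_equiv_nat ((d : ℤ) - j) (Int.natCast_pos.2 hl)
  refine ⟨k, Int.ofNat_lt.1 hk, Int.natCast_modEq_iff.1 ?_⟩
  simpa using (hmod.add_left (j : ℤ)).symm

theorem stmt11_general {V : Type*} {E : Set (V × V)} (hE : HasIsolatedCycles E) {C : Set V}
    (hC : (C, C) ∈ SkelEdges E) {r : V} {dep : V → ℕ}
    (hdep : ∀ v ∈ descendants E C, ∃ p, IsPath E (dep v) p r v) {j : ℕ}
    (hj : ∀ v ∈ descendants E C, dep v < j + C.ncard) :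
    descendants E C ∩ reachableIn E r (j + C.ncard) = descendants E C ∩ reachableIn E r j ∧
    (∀ v, v ∈ descendants E C ↔
      ∃ k < C.ncard, v ∈ descendants E C ∩ reachableIn E r (j + k)) ∧
    (∀ k < C.ncard, ∀ k' < C.ncard, k ≠ k' →
      (descendants E C ∩ reachableIn E r (j + k)) ∩
        (descendants E C ∩ reachableIn E r (j + k')) = ∅) := by
  have hr : ∀ u ∈ C, Reachable E r u := fun u hu =>
    let ⟨p, hp⟩ := hdep u ⟨u, hu, .refl u⟩
    ⟨_, p, hp.1⟩
  have hiff : ∀ v ∈ descendants E C, ∀ k,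
      v ∈ reachableIn E r (j + k) ↔ dep v ≡ j + k [MOD C.ncard] := by
    intro v hv k
    obtain ⟨p, hp⟩ := hdep v hv
    rw [hE.mem_reachableIn_iff hC hr hv hp, and_iff_right_iff_imp]
    exact fun hmod => hmod.le_of_lt_add ((hj v hv).trans_le (by omega))
  refine ⟨?_, fun v => ⟨fun hv => ?_, fun ⟨_, _, hv, _⟩ => hv⟩, fun k hk k' hk' hne => ?_⟩
  · ext v
    refine and_congr_right fun hv => (hiff v hv C.ncard).trans ?_
    simpa [Nat.ModEq] using (hiff v hv 0).symm
  · obtain ⟨k, hk, hmod⟩ := exists_lt_modEq_add (hE.isSingleCycleOn C hC).ncard_pos (dep v) j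
    exact ⟨k, hk, hv, (hiff v hv k).2 hmod⟩
  · refine Set.eq_empty_of_forall_notMem fun v ⟨⟨hv, hvk⟩, ⟨_, hvk'⟩⟩ => hne ?_
    have hmod := ((hiff v hv k).1 hvk).symm.trans ((hiff v hv k').1 hvk')
    exact (hmod.add_left_cancel' j).eq_of_lt_of_lt hk hk'

/-- Lemma 4 of the paper: in a reduced graph, for every nontrivial
strong component `C` (a directed cycle of length `l`) and every `j ≥ 1` with
`j > d_p − ℓ_p`: the sets `V_p⁺(j)` are `ℓ_p`-periodic in `j`, and `V_p⁺` is the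
disjoint union of `V_p⁺(j), …, V_p⁺(j + ℓ_p − 1)`. -/
theorem stmt11 {n : ℕ} (hn : 1 ≤ n) (E : Set (Node n × Node n))
    (hred : ReducedGraph n E)
    (C : Set (Node n)) (hC : C ∈ SkelNodes E) (hCnontriv : (C, C) ∈ SkelEdges E)
    (l : ℕ) (c : ℕ → Node n) (u0 : Node n) (hu0 : u0 ∈ C)
    (hcyc : IsCycle E l c u0) (hcycset : {x | ∃ t < l, c t = x} = C)
    (dep : Node n → ℕ)
    (hdep : ∀ v : Node n, ∃ p : ℕ → Node n, IsPath E (dep v) p (none : Node n) v)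
    (dp : ℕ) (hdp : IsGreatest {d : ℕ | ∃ v ∈ VpPlus E C, dep v = d} dp)
    (j : ℕ) (hj : 1 ≤ j) (hjd : (dp : ℤ) - (l : ℤ) < (j : ℤ)) :
    VpPlus E C ∩ VSet E (j + l) = VpPlus E C ∩ VSet E j ∧
    (∀ v : Node n, v ∈ VpPlus E C ↔ ∃ k < l, v ∈ VpPlus E C ∩ VSet E (j + k)) ∧
    (∀ k < l, ∀ k' < l, k ≠ k' →
      (VpPlus E C ∩ VSet E (j + k)) ∩ (VpPlus E C ∩ VSet E (j + k')) = ∅) := by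
  obtain rfl : C.ncard = l := hcycset ▸ ncard_setOf_exists_lt hcyc.2.2
  exact stmt11_general hred.hasIsolatedCycles hCnontriv (fun v _ => hdep v) fun v hv => by
    have := hdp.2 ⟨v, hv, rfl⟩
    omega
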